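/- arXiv:1506.08912 — 2 statements merged into one kernel-verified Lean document; each statement's English description precedes it below -/
import Mathlib

section
/- For every real β ≥ 0, the family of functions z ↦ Z^{(β)}_{m,n}(z, conj(z)) / √(C(m,n,β)), indexed by (m,n) ∈ ℕ × ℕ, where C(m,n,β) = Γ(β + max(m,n) + 1) / (min(m,n))!, is a complete orthonormal system (Hilbert basis) of the Hilbert space L²(ℂ, dν), where dν(z) = π^{−1} |z|^{2β} e^{−|z|²} dA(z) and dA is Lebesgue measure on ℂ ≅ ℝ². -/
open MeasureTheory Finset

/-- Pochhammer symbol `(a)_j = a (a+1) ⋯ (a+j-1)`. -/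
noncomputable def poch (a : ℝ) (j : ℕ) : ℝ := ∏ i ∈ Finset.range j, (a + i)

/-- The generalized 2D Laguerre polynomial `Z^{(β)}_{m,n}(z,w)` (for `m ≥ n`). -/
noncomputable def Zc (β : ℝ) (m n : ℕ) (z w : ℂ) : ℂ :=
  ∑ k ∈ Finset.range (n + 1),
    (((-1 : ℝ) ^ (n - k) * poch (β + 1) m /
        (k.factorial * (n - k).factorial * poch (β + 1) (m - k)) : ℝ) : ℂ) *
      z ^ (m - k) * w ^ (n - k)

/-- The 2D Laguerre polynomial for all index pairs, using `Z^{(β)}_{m,n}(z,w) = Z^{(β)}_{n,m}(w,z)`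
for `m < n`. -/
noncomputable def Zfull (β : ℝ) (m n : ℕ) (z w : ℂ) : ℂ :=
  if n ≤ m then Zc β m n z w else Zc β n m w z

/-- Normalization constant `C(m,n,β) = Γ(β + max(m,n) + 1) / (min(m,n))!`. -/
noncomputable def Cconst (β : ℝ) (m n : ℕ) : ℝ :=
  Real.Gamma (β + max m n + 1) / (min m n).factorial

/-!
A polynomial `Z_{m,n}(z, z̄)` is a combination of the monomials `z^{m-k} z̄^{n-k}`, `k ≤ min m n`.
By rotation invariance the moment `∫ z^a z̄^b dν` vanishes for `a ≠ b`, and it is `Γ(β + a + 1)` for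
`a = b`. Hence pairing `Z_{m,n}` with a monomial `z^a z̄^b` such that `a - b = m - n` and
`min a b ≤ min m n` produces, up to a factor, the `min m n`-th finite difference of a polynomial of
degree `min a b`; it vanishes unless `(a, b) = (m, n)`. As `Z_{m,n}` is triangular in the monomials,
orthogonality follows.

For completeness, `g ∈ L²(ν)` orthogonal to every `Z_{m,n}` is orthogonal to every monomial, by
triangularity again. Since `ν` integrates `exp (c ‖z‖)` for all `c`, the characters
`z ↦ exp (i ⟪z, t⟫)` may be expanded in powers under the integral, so the Fourier transform of the
complex measure `g dν` vanishes and therefore `g = 0`.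
-/

open scoped ComplexConjugate

section FourierUniqueness

variable {E : Type*} [NormedAddCommGroup E] [InnerProductSpace ℝ E] [MeasurableSpace E]
  {μ : Measure E}

lemma charFun_withDensity_ofReal {u : E → ℝ} (hu : AEMeasurable u μ) (t : E) :
    charFun (μ.withDensity fun x => ENNReal.ofReal (u x)) t =
      ∫ x, Complex.exp (inner ℝ x t * Complex.I) * max (u x) 0 ∂μ := by
  rw [charFun_apply, integral_withDensity_eq_integral_toReal_smul₀ hu.ennreal_ofReal (by simp)]
  simp only [ENNReal.toReal_ofReal', Complex.real_smul, mul_comm]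

variable [BorelSpace E]

theorem hasSum_integral_cexp_inner_mul {g : E → ℂ}
    (hg : ∀ c : ℝ, Integrable (fun x => Real.exp (c * ‖x‖) • g x) μ) (t : E) :
    HasSum (fun n : ℕ => Complex.I ^ n / n.factorial * ∫ x, (inner ℝ x t : ℂ) ^ n * g x ∂μ)
      (∫ x, Complex.exp (inner ℝ x t * Complex.I) * g x ∂μ) := by
  have hg_meas : AEStronglyMeasurable g μ := by simpa using (hg 0).aestronglyMeasurable
  have hasSum_bound (x : E) : HasSum (fun n : ℕ => (‖t‖ * ‖x‖) ^ n / n.factorial * ‖g x‖)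
      (Real.exp (‖t‖ * ‖x‖) * ‖g x‖) := by
    rw [Real.exp_eq_exp_ℝ]
    exact (NormedSpace.expSeries_div_hasSum_exp (‖t‖ * ‖x‖)).mul_right _
  have norm_term_le (n : ℕ) (x : E) :
      ‖Complex.I ^ n / n.factorial * ((inner ℝ x t : ℂ) ^ n * g x)‖ ≤
        (‖t‖ * ‖x‖) ^ n / n.factorial * ‖g x‖ := by
    rw [← mul_assoc, div_mul_eq_mul_div, ← mul_pow]
    simp only [norm_mul, norm_div, norm_pow, Complex.norm_I, one_mul, Complex.norm_real,
      Complex.norm_natCast]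
    gcongr
    exact (norm_inner_le_norm x t).trans_eq (mul_comm _ _)
  simp_rw [← integral_const_mul]
  refine hasSum_integral_of_dominated_convergence
    (fun (n : ℕ) x => (‖t‖ * ‖x‖) ^ n / n.factorial * ‖g x‖)
    (fun n => ((Continuous.aestronglyMeasurable (by fun_prop)).mul hg_meas).const_mul _)
    (fun n => .of_forall (norm_term_le n))
    (.of_forall fun x => (hasSum_bound x).summable) ?bound_integrable (.of_forall fun x => ?hasSum)
  case bound_integrable =>
    simp_rw [fun x => (hasSum_bound x).tsum_eq]
    simpa only [norm_smul, Real.norm_eq_abs, Real.abs_exp] using (hg ‖t‖).norm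
  case hasSum =>
    have term_eq (n : ℕ) : Complex.I ^ n / n.factorial * ((inner ℝ x t : ℂ) ^ n * g x) =
        (inner ℝ x t * Complex.I) ^ n / n.factorial * g x := by
      ring
    simp_rw [term_eq, Complex.exp_eq_exp_ℂ]
    exact (NormedSpace.expSeries_div_hasSum_exp _).mul_right (g x)

lemma integrable_cexp_inner_mul {g : E → ℂ} (hg : Integrable g μ) (t : E) :
    Integrable (fun x => Complex.exp (inner ℝ x t * Complex.I) * g x) μ :=
  hg.bdd_mul (c := 1) (Continuous.aestronglyMeasurable (by fun_prop))
    (.of_forall fun x => (Complex.norm_exp_ofReal_mul_I _).le)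

variable [CompleteSpace E] [SecondCountableTopology E]

lemma ae_eq_zero_of_integral_cexp_inner_mul_ofReal_eq_zero {u : E → ℝ} (hu : Integrable u μ)
    (h : ∀ t, ∫ x, Complex.exp (inner ℝ x t * Complex.I) * u x ∂μ = 0) : u =ᵐ[μ] 0 := by
  have := isFiniteMeasure_withDensity_ofReal hu.2
  have := isFiniteMeasure_withDensity_ofReal hu.neg.2
  have withDensity_eq : μ.withDensity (fun x => ENNReal.ofReal (u x)) =
      μ.withDensity fun x => ENNReal.ofReal ((-u) x) := by
    refine Measure.ext_of_charFun (funext fun t => ?_)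
    have hu_pos : Integrable (fun x => ((max (u x) 0 : ℝ) : ℂ)) μ := hu.pos_part.ofReal
    have hu_neg : Integrable (fun x => ((max ((-u) x) 0 : ℝ) : ℂ)) μ := hu.neg.pos_part.ofReal
    rw [charFun_withDensity_ofReal hu.aemeasurable, charFun_withDensity_ofReal hu.neg.aemeasurable,
      ← sub_eq_zero, ← integral_sub (integrable_cexp_inner_mul hu_pos t)
        (integrable_cexp_inner_mul hu_neg t), ← h t]
    simp_rw [← mul_sub, ← Complex.ofReal_sub, Pi.neg_apply, max_zero_sub_max_neg_zero_eq_self]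
  rw [withDensity_eq_iff hu.aemeasurable.ennreal_ofReal hu.neg.aemeasurable.ennreal_ofReal
    hu.lintegral_lt_top.ne] at withDensity_eq
  filter_upwards [withDensity_eq] with x hx
  have hx' := congrArg ENNReal.toReal hx
  simp only [ENNReal.toReal_ofReal', Pi.neg_apply] at hx'
  rw [Pi.zero_apply, ← max_zero_sub_max_neg_zero_eq_self (u x), hx', sub_self]

theorem ae_eq_zero_of_integral_cexp_inner_mul_eq_zero {g : E → ℂ} (hg : Integrable g μ)
    (h : ∀ t, ∫ x, Complex.exp (inner ℝ x t * Complex.I) * g x ∂μ = 0) : g =ᵐ[μ] 0 := by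
  have h_conj (t : E) : ∫ x, Complex.exp (inner ℝ x t * Complex.I) * conj (g x) ∂μ = 0 := by
    have := congrArg conj (h (-t))
    rw [← integral_conj] at this
    simpa [← Complex.exp_conj] using this
  have hg_conj : Integrable (fun x => conj (g x)) μ :=
    (Complex.conjCLE : ℂ →L[ℝ] ℂ).integrable_comp hg
  have hre : (fun x => (g x).re) =ᵐ[μ] 0 := by
    refine ae_eq_zero_of_integral_cexp_inner_mul_ofReal_eq_zero hg.re fun t => ?_
    simp_rw [Complex.re_eq_add_conj, ← mul_div_assoc, mul_add]
    rw [integral_div, integral_add (integrable_cexp_inner_mul hg t)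
      (integrable_cexp_inner_mul hg_conj t), h, h_conj, add_zero, zero_div]
  have him : (fun x => (g x).im) =ᵐ[μ] 0 := by
    refine ae_eq_zero_of_integral_cexp_inner_mul_ofReal_eq_zero hg.im fun t => ?_
    simp_rw [Complex.im_eq_sub_conj, ← mul_div_assoc, mul_sub]
    rw [integral_div, integral_sub (integrable_cexp_inner_mul hg t)
      (integrable_cexp_inner_mul hg_conj t), h, h_conj, sub_zero, zero_div]
  filter_upwards [hre, him] with x hx_re hx_im using Complex.ext hx_re hx_im

end FourierUniqueness

section ExponentialMoments

variable {E : Type*} [NormedAddCommGroup E] [MeasurableSpace E]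

/-- A measure has all exponential moments if `exp (c ‖x‖)` is integrable for every real `c`. This
is the decay that makes a measure on a Euclidean space determined by polynomial moments. -/
def HasExpMoments (μ : Measure E) : Prop :=
  ∀ c : ℝ, Integrable (fun x => Real.exp (c * ‖x‖)) μ

namespace HasExpMoments

variable {μ : Measure E} (hμ : HasExpMoments μ)

include hμ

lemma memLp_two_exp_mul_norm (c : ℝ) : MemLp (fun x => Real.exp (c * ‖x‖)) 2 μ := by
  rw [memLp_two_iff_integrable_sq (hμ c).aestronglyMeasurable]
  refine (hμ (2 * c)).congr (.of_forall fun x => ?_)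
  simp only [← Real.exp_nat_mul, Nat.cast_ofNat, mul_assoc]

lemma integrable_exp_mul_norm_smul {g : E → ℂ} (hg : MemLp g 2 μ) (c : ℝ) :
    Integrable (fun x => Real.exp (c * ‖x‖) • g x) μ :=
  memLp_one_iff_integrable.mp (hg.smul (hμ.memLp_two_exp_mul_norm c))

end HasExpMoments

end ExponentialMoments

section Bimonomials

/-- The monomial `z^a z̄^b` in the independent variables `z` and `z̄`; the 2D Laguerre polynomials
are expanded in these. -/
noncomputable def bimonomial (a b : ℕ) (z : ℂ) : ℂ := z ^ a * conj z ^ b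

@[fun_prop]
lemma continuous_bimonomial (a b : ℕ) : Continuous (bimonomial a b) := by
  unfold bimonomial
  fun_prop

lemma norm_bimonomial (a b : ℕ) (z : ℂ) : ‖bimonomial a b z‖ = ‖z‖ ^ (a + b) := by
  simp [bimonomial, pow_add]

lemma bimonomial_mul_bimonomial (a b c d : ℕ) (z : ℂ) :
    bimonomial a b z * bimonomial c d z = bimonomial (a + c) (b + d) z := by
  unfold bimonomial
  ring

lemma conj_bimonomial (a b : ℕ) (z : ℂ) : conj (bimonomial a b z) = bimonomial b a z := by
  simp [bimonomial, mul_comm]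

lemma bimonomial_self (a : ℕ) (z : ℂ) : bimonomial a a z = (‖z‖ ^ (2 * a) : ℝ) := by
  rw [bimonomial, ← mul_pow, Complex.mul_conj', pow_mul]
  push_cast
  rfl

lemma bimonomial_circle_smul (a b : ℕ) (c : Circle) (z : ℂ) :
    bimonomial a b (c • z) = bimonomial a b c * bimonomial a b z := by
  simp only [bimonomial, Circle.smul_def, smul_eq_mul, map_mul]
  ring

lemma norm_bimonomial_le (a b : ℕ) (z : ℂ) :
    ‖bimonomial a b z‖ ≤ (a + b).factorial * Real.exp ‖z‖ := by
  rw [norm_bimonomial, mul_comm, ← div_le_iff₀ (by positivity)]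
  exact Real.pow_div_factorial_le_exp ‖z‖ (norm_nonneg z) (a + b)

lemma exists_circle_bimonomial_eq_neg_one {a b : ℕ} (hab : a ≠ b) :
    ∃ c : Circle, bimonomial a b c = -1 := by
  have hab' : (a : ℂ) - b ≠ 0 := sub_ne_zero.mpr (by exact_mod_cast hab)
  refine ⟨Circle.exp (Real.pi / (a - b)), ?_⟩
  rw [bimonomial, Circle.coe_exp, ← Complex.exp_conj, ← Complex.exp_nat_mul, ← Complex.exp_nat_mul,
    ← Complex.exp_add, ← Complex.exp_pi_mul_I]
  congr 1
  simp only [map_mul, Complex.conj_ofReal, Complex.conj_I]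
  push_cast
  field_simp
  ring

theorem integral_bimonomial_eq_zero {μ : Measure ℂ} [SMulInvariantMeasure Circle ℂ μ] {a b : ℕ}
    (hab : a ≠ b) : ∫ z, bimonomial a b z ∂μ = 0 := by
  obtain ⟨c, hc⟩ := exists_circle_bimonomial_eq_neg_one hab
  have h := integral_smul_eq_self (μ := μ) (bimonomial a b) (g := c)
  simp only [bimonomial_circle_smul, hc, neg_one_mul, integral_neg] at h
  exact self_eq_neg.mp h.symm

variable {μ : Measure ℂ}

lemma integrable_bimonomial_mul {g : ℂ → ℂ}
    (hg_meas : AEStronglyMeasurable g μ) (hg : Integrable (fun z => Real.exp ‖z‖ • g z) μ)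
    (a b : ℕ) : Integrable (fun z => bimonomial a b z * g z) μ := by
  refine (hg.norm.const_mul ((a + b).factorial : ℝ)).mono'
    ((continuous_bimonomial a b).aestronglyMeasurable.mul hg_meas) (.of_forall fun z => ?_)
  rw [norm_mul, norm_smul, Real.norm_of_nonneg (Real.exp_nonneg _), ← mul_assoc]
  gcongr
  exact norm_bimonomial_le a b z

lemma HasExpMoments.memLp_two_bimonomial (hμ : HasExpMoments μ) (a b : ℕ) :
    MemLp (bimonomial a b) 2 μ := by
  refine ((hμ.memLp_two_exp_mul_norm 1).const_mul ((a + b).factorial : ℝ)).of_le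
    (continuous_bimonomial a b).aestronglyMeasurable (.of_forall fun z => ?_)
  rw [one_mul, Real.norm_of_nonneg (by positivity)]
  exact norm_bimonomial_le a b z

lemma HasExpMoments.integrable_bimonomial (hμ : HasExpMoments μ) (a b : ℕ) :
    Integrable (bimonomial a b) μ := by
  refine ((hμ 1).const_mul ((a + b).factorial : ℝ)).mono'
    (continuous_bimonomial a b).aestronglyMeasurable (.of_forall fun z => ?_)
  rw [one_mul]
  exact norm_bimonomial_le a b z

lemma inner_pow_eq_sum_bimonomial (z t : ℂ) (n : ℕ) :
    (inner ℝ z t : ℂ) ^ n = ∑ k ∈ range (n + 1),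
      ((conj t / 2) ^ k * (t / 2) ^ (n - k) * n.choose k) * bimonomial k (n - k) z := by
  have inner_eq : (inner ℝ z t : ℂ) = conj t / 2 * z + t / 2 * conj z := by
    rw [Complex.inner, Complex.re_eq_add_conj]
    simp only [map_mul, Complex.conj_conj]
    ring
  rw [inner_eq, add_pow]
  refine sum_congr rfl fun k _ => ?_
  rw [bimonomial, mul_pow, mul_pow]
  ring

theorem ae_eq_zero_of_integral_bimonomial_mul_eq_zero {g : ℂ → ℂ}
    (hg : ∀ c : ℝ, Integrable (fun z => Real.exp (c * ‖z‖) • g z) μ)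
    (h : ∀ a b, ∫ z, bimonomial a b z * g z ∂μ = 0) : g =ᵐ[μ] 0 := by
  have hg_int : Integrable g μ := by simpa using hg 0
  have hg_mul := integrable_bimonomial_mul hg_int.aestronglyMeasurable (by simpa using hg 1)
  have moments_eq_zero (t : ℂ) (n : ℕ) : ∫ z, (inner ℝ z t : ℂ) ^ n * g z ∂μ = 0 := by
    simp_rw [inner_pow_eq_sum_bimonomial, sum_mul, mul_assoc _ (bimonomial _ _ _)]
    rw [integral_finsetSum _ fun k _ => (hg_mul _ _).const_mul _]
    simp_rw [integral_const_mul, h, mul_zero, sum_const_zero]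
  refine ae_eq_zero_of_integral_cexp_inner_mul_eq_zero hg_int fun t =>
    (hasSum_integral_cexp_inner_mul hg t).unique ?_
  simp_rw [moments_eq_zero, mul_zero]
  exact hasSum_zero

end Bimonomials

section Coefficients

/-- The coefficient of `z^{M-k} w^{N-k}` in `Z^{(β)}_{M,N}(z, w)`, for `k ≤ N ≤ M`. -/
noncomputable def laguerreCoeff (β : ℝ) (M N k : ℕ) : ℝ :=
  (-1) ^ (N - k) * poch (β + 1) M / (k.factorial * (N - k).factorial * poch (β + 1) (M - k))

lemma poch_eq_eval_ascPochhammer (a : ℝ) (j : ℕ) : poch a j = (ascPochhammer ℝ j).eval a := by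
  induction j with
  | zero => simp [poch]
  | succ j ih => rw [ascPochhammer_succ_eval, ← ih, poch, poch, prod_range_succ]

lemma poch_pos {a : ℝ} (ha : 0 < a) (j : ℕ) : 0 < poch a j := by
  rw [poch_eq_eval_ascPochhammer]
  exact ascPochhammer_pos j a ha

lemma Gamma_add_natCast_eq_poch_mul {a : ℝ} (ha : 0 < a) (j : ℕ) :
    Real.Gamma (a + j) = poch a j * Real.Gamma a := by
  induction j with
  | zero => simp [poch]
  | succ j ih =>
    rw [Nat.cast_succ, ← add_assoc, Real.Gamma_add_one (by positivity), ih, poch, poch,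
      prod_range_succ]
    ring

theorem sum_neg_one_pow_mul_choose_mul_eval {R : Type*} [CommRing R] {P : Polynomial R} {N : ℕ}
    (hP : P.natDegree ≤ N) :
    ∑ j ∈ range (N + 1), (-1) ^ j * (N.choose j : R) * P.eval (j : R) =
      (-1) ^ N * (N.factorial * P.coeff N) := by
  have fwdDiff_eq : (fwdDiff (1 : R))^[N] P.eval 0 = N.factorial * P.coeff N := by
    rcases hP.lt_or_eq with hlt | rfl
    · rw [Polynomial.fwdDiff_iter_eq_zero_of_degree_lt hlt,
        Polynomial.coeff_eq_zero_of_natDegree_lt hlt, mul_zero, Pi.zero_apply]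
    · simp [Polynomial.fwdDiff_iter_degree_eq_factorial, mul_comm]
  rw [← fwdDiff_eq, fwdDiff_iter_eq_sum_shift, mul_sum]
  refine sum_congr rfl fun j hj => ?_
  have sign_eq : (-1 : R) ^ j = (-1) ^ N * (-1) ^ (N - j) := by
    rw [← pow_add]
    exact neg_one_pow_congr (by grind)
  rw [sign_eq]
  simp [zsmul_eq_mul, mul_assoc]

lemma sum_neg_one_pow_mul_choose_mul_poch (a : ℝ) {N i : ℕ} (hi : i ≤ N) :
    ∑ j ∈ range (N + 1), (-1 : ℝ) ^ j * N.choose j * poch (a + j) i =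
      if i = N then (-1 : ℝ) ^ N * N.factorial else 0 := by
  set P : Polynomial ℝ := (ascPochhammer ℝ i).comp (.X + .C a)
  have hP_monic : P.Monic := (monic_ascPochhammer ℝ i).comp_X_add_C a
  have hP_deg : P.natDegree = i := by
    rw [Polynomial.natDegree_comp, ascPochhammer_natDegree, Polynomial.natDegree_X_add_C, mul_one]
  have hP_eval (j : ℕ) : poch (a + j) i = P.eval (j : ℝ) := by
    simp [P, poch_eq_eval_ascPochhammer, add_comm]
  simp_rw [hP_eval]
  rw [sum_neg_one_pow_mul_choose_mul_eval (hP_deg.trans_le hi)]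
  split_ifs with h
  · rw [← h, ← hP_deg, hP_monic.coeff_natDegree, mul_one]
  · rw [Polynomial.coeff_eq_zero_of_natDegree_lt (by omega), mul_zero, mul_zero]

variable {β : ℝ} (hβ : -1 < β)

include hβ

lemma laguerreCoeff_zero (M N : ℕ) : laguerreCoeff β M N 0 = (-1) ^ N / N.factorial := by
  have := (poch_pos (a := β + 1) (by linarith) M).ne'
  simp only [laguerreCoeff, Nat.sub_zero, Nat.factorial_zero, Nat.cast_one, one_mul]
  field_simp

lemma laguerreCoeff_mul_Gamma {M N k : ℕ} (hk : k ≤ N) (i : ℕ) :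
    laguerreCoeff β M N k * Real.Gamma (β + (M - k + i : ℕ) + 1) =
      Real.Gamma (β + M + 1) / N.factorial *
        ((-1) ^ (N - k) * N.choose k * poch (β + 1 + (M - k : ℕ)) i) := by
  have hβ' : 0 < β + 1 := by linarith
  have Gamma_M : Real.Gamma (β + M + 1) = poch (β + 1) M * Real.Gamma (β + 1) := by
    rw [← Gamma_add_natCast_eq_poch_mul hβ', add_right_comm]
  have Gamma_shift : Real.Gamma (β + (M - k + i : ℕ) + 1) =
      poch (β + 1 + (M - k : ℕ)) i * (poch (β + 1) (M - k) * Real.Gamma (β + 1)) := by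
    rw [← Gamma_add_natCast_eq_poch_mul hβ', ← Gamma_add_natCast_eq_poch_mul (by positivity)]
    congr 1
    push_cast
    ring
  have := (poch_pos hβ' (M - k)).ne'
  rw [Gamma_M, Gamma_shift, laguerreCoeff, Nat.cast_choose ℝ hk]
  field_simp

theorem sum_laguerreCoeff_mul_Gamma {M N i : ℕ} (hNM : N ≤ M) (hi : i ≤ N) :
    ∑ k ∈ range (N + 1), laguerreCoeff β M N k * Real.Gamma (β + (M - k + i : ℕ) + 1) =
      if i = N then (-1 : ℝ) ^ N * Real.Gamma (β + M + 1) else 0 := by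
  calc
    _ = ∑ k ∈ range (N + 1), Real.Gamma (β + M + 1) / N.factorial *
          ((-1) ^ (N - k) * N.choose k * poch (β + 1 + (M - k : ℕ)) i) :=
      sum_congr rfl fun k hk => laguerreCoeff_mul_Gamma hβ (mem_range_succ_iff.mp hk) i
    _ = Real.Gamma (β + M + 1) / N.factorial * ∑ j ∈ range (N + 1),
          (-1) ^ j * N.choose j * poch (β + 1 + (M - N : ℕ) + j) i := by
      rw [← mul_sum, ← sum_range_reflect]
      congr 1
      refine sum_congr rfl fun j hj => ?_
      have hj : j ≤ N := mem_range_succ_iff.mp hj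
      have hMj : M - (N - j) = M - N + j := by omega
      rw [Nat.add_sub_cancel, Nat.sub_sub_self hj, Nat.choose_symm hj, hMj, Nat.cast_add,
        ← add_assoc]
    _ = _ := by
      rw [sum_neg_one_pow_mul_choose_mul_poch _ hi]
      split_ifs
      · field_simp
      · rw [mul_zero]

end Coefficients

section Measure

/-- The density `π⁻¹ |z|^{2β} e^{-|z|²}` of the orthogonality measure. -/
noncomputable def laguerreWeight (β : ℝ) (z : ℂ) : ℝ :=
  Real.pi⁻¹ * ‖z‖ ^ (2 * β) * Real.exp (-(‖z‖ ^ 2))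

/-- The measure `ν` on `ℂ` for which the 2D Laguerre polynomials with parameter `β` are
orthogonal. -/
noncomputable def laguerreMeasure (β : ℝ) : Measure ℂ :=
  volume.withDensity fun z => ENNReal.ofReal (laguerreWeight β z)

@[fun_prop]
lemma measurable_laguerreWeight (β : ℝ) : Measurable (laguerreWeight β) := by
  unfold laguerreWeight
  fun_prop

lemma laguerreWeight_nonneg (β : ℝ) (z : ℂ) : 0 ≤ laguerreWeight β z := by
  unfold laguerreWeight
  positivity

lemma integral_laguerreMeasure {G : Type*} [NormedAddCommGroup G] [NormedSpace ℝ G] (β : ℝ)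
    (f : ℂ → G) : ∫ z, f z ∂laguerreMeasure β = ∫ z, laguerreWeight β z • f z := by
  rw [laguerreMeasure, integral_withDensity_eq_integral_toReal_smul (by fun_prop) (by simp)]
  simp_rw [ENNReal.toReal_ofReal (laguerreWeight_nonneg β _)]

lemma integrable_laguerreMeasure_iff {G : Type*} [NormedAddCommGroup G] [NormedSpace ℝ G] {β : ℝ}
    {f : ℂ → G} :
    Integrable f (laguerreMeasure β) ↔ Integrable fun z => laguerreWeight β z • f z := by
  rw [laguerreMeasure, integrable_withDensity_iff_integrable_smul' (by fun_prop) (by simp)]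
  simp_rw [ENNReal.toReal_ofReal (laguerreWeight_nonneg β _)]

instance smulInvariantMeasure_laguerreMeasure (β : ℝ) :
    SMulInvariantMeasure Circle ℂ (laguerreMeasure β) where
  measure_preimage_smul c s hs := by
    have weight_smul (z : ℂ) : laguerreWeight β (rotation c z) = laguerreWeight β z := by
      simp only [laguerreWeight, LinearIsometryEquiv.norm_map]
    rw [laguerreMeasure, withDensity_apply _ (measurable_const_smul c hs), withDensity_apply _ hs,
      ← (rotation c).measurePreserving.setLIntegral_comp_preimage hs (by fun_prop)]
    simp_rw [weight_smul]
    rfl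

variable {β : ℝ} (hβ : -1 < β)

include hβ

lemma integrable_norm_rpow_mul_exp_neg_half_sq :
    Integrable fun z : ℂ => ‖z‖ ^ (2 * β) * Real.exp (-(1 / 2) * ‖z‖ ^ (2 : ℝ)) := by
  refine .of_integral_ne_zero ?_
  rw [Complex.integral_rpow_mul_exp_neg_mul_rpow (by norm_num) (by linarith) (by norm_num)]
  have := Real.Gamma_pos_of_pos (show 0 < (2 * β + 2) / 2 by linarith)
  positivity

theorem hasExpMoments_laguerreMeasure : HasExpMoments (laguerreMeasure β) := by
  intro c
  rw [integrable_laguerreMeasure_iff]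
  refine ((integrable_norm_rpow_mul_exp_neg_half_sq hβ).const_mul
    (Real.pi⁻¹ * Real.exp (c ^ 2 / 2))).mono' (by fun_prop) (.of_forall fun z => ?_)
  have exp_le : Real.exp (-(‖z‖ ^ 2)) * Real.exp (c * ‖z‖) ≤
      Real.exp (c ^ 2 / 2) * Real.exp (-(1 / 2) * ‖z‖ ^ (2 : ℝ)) := by
    rw [← Real.exp_add, ← Real.exp_add, Real.exp_le_exp, Real.rpow_two]
    nlinarith [sq_nonneg (c - ‖z‖)]
  rw [smul_eq_mul, Real.norm_of_nonneg (mul_nonneg (laguerreWeight_nonneg β z) (Real.exp_nonneg _))]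
  calc laguerreWeight β z * Real.exp (c * ‖z‖)
      = Real.pi⁻¹ * ‖z‖ ^ (2 * β) * (Real.exp (-(‖z‖ ^ 2)) * Real.exp (c * ‖z‖)) := by
        rw [laguerreWeight, mul_assoc]
    _ ≤ Real.pi⁻¹ * ‖z‖ ^ (2 * β) *
          (Real.exp (c ^ 2 / 2) * Real.exp (-(1 / 2) * ‖z‖ ^ (2 : ℝ))) := by gcongr
    _ = _ := by ring

lemma norm_rpow_mul_norm_pow (a : ℕ) (z : ℂ) :
    ‖z‖ ^ (2 * β) * ‖z‖ ^ (2 * a) = ‖z‖ ^ (2 * β + 2 * a) := by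
  rcases Nat.eq_zero_or_pos a with rfl | ha
  · simp
  · have : (1 : ℝ) ≤ a := by exact_mod_cast ha
    have := Real.rpow_add_natCast' (norm_nonneg z)
      (show 2 * β + (2 * a : ℕ) ≠ 0 by push_cast; linarith)
    rw [← this]
    push_cast
    rfl

lemma integral_bimonomial_self_laguerreMeasure (a : ℕ) :
    ∫ z, bimonomial a a z ∂laguerreMeasure β = Real.Gamma (β + a + 1) := by
  have weight_mul (z : ℂ) : laguerreWeight β z • bimonomial a a z =
      ((Real.pi⁻¹ * (‖z‖ ^ (2 * β + 2 * a) * Real.exp (-‖z‖ ^ (2 : ℝ))) : ℝ) : ℂ) := by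
    rw [bimonomial_self, ← norm_rpow_mul_norm_pow hβ, Real.rpow_two, laguerreWeight,
      Complex.real_smul, ← Complex.ofReal_mul]
    congr 1
    ring
  simp_rw [integral_laguerreMeasure, weight_mul]
  rw [integral_complex_ofReal, integral_const_mul,
    Complex.integral_rpow_mul_exp_neg_rpow one_le_two
      (by linarith [(Nat.cast_nonneg a : (0 : ℝ) ≤ a)]),
    show (2 * β + 2 * a + 2) / 2 = β + a + 1 by ring]
  congr 1
  field_simp

theorem integral_bimonomial_laguerreMeasure (a b : ℕ) :
    ∫ z, bimonomial a b z ∂laguerreMeasure β =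
      if a = b then (Real.Gamma (β + a + 1) : ℂ) else 0 := by
  split_ifs with hab
  · subst hab
    exact integral_bimonomial_self_laguerreMeasure hβ a
  · exact integral_bimonomial_eq_zero hab

end Measure

section Laguerre2D

/-- The 2D Laguerre polynomial `Z^{(β)}_{m,n}(z, z̄)` as a function of one complex variable. -/
noncomputable def laguerre2D (β : ℝ) (m n : ℕ) (z : ℂ) : ℂ := Zfull β m n z (conj z)

lemma laguerre2D_eq_sum (β : ℝ) (m n : ℕ) (z : ℂ) :
    laguerre2D β m n z = ∑ k ∈ range (min m n + 1),
      laguerreCoeff β (max m n) (min m n) k * bimonomial (m - k) (n - k) z := by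
  unfold laguerre2D Zfull Zc bimonomial laguerreCoeff
  split_ifs with h
  · rw [min_eq_right h, max_eq_left h]
    simp_rw [mul_assoc]
  · rw [min_eq_left (by omega), max_eq_right (by omega)]
    simp_rw [mul_assoc, mul_comm (z ^ _)]

lemma conj_laguerre2D (β : ℝ) (m n : ℕ) (z : ℂ) :
    conj (laguerre2D β m n z) = ∑ k ∈ range (min m n + 1),
      laguerreCoeff β (max m n) (min m n) k * bimonomial (n - k) (m - k) z := by
  simp only [laguerre2D_eq_sum, map_sum, map_mul, Complex.conj_ofReal, conj_bimonomial]

lemma integral_conj_laguerre2D_mul {μ : Measure ℂ} {g : ℂ → ℂ}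
    (hg : ∀ a b, Integrable (fun z => bimonomial a b z * g z) μ) (β : ℝ) (m n : ℕ) :
    ∫ z, conj (laguerre2D β m n z) * g z ∂μ = ∑ k ∈ range (min m n + 1),
      laguerreCoeff β (max m n) (min m n) k * ∫ z, bimonomial (n - k) (m - k) z * g z ∂μ := by
  simp_rw [conj_laguerre2D, sum_mul, mul_assoc]
  rw [integral_finsetSum _ fun k _ => (hg _ _).const_mul _]
  simp_rw [integral_const_mul]

variable {β : ℝ} (hβ : -1 < β)

include hβ

lemma Cconst_pos (m n : ℕ) : 0 < Cconst β m n := by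
  have : (0 : ℝ) ≤ (max m n : ℕ) := Nat.cast_nonneg _
  exact div_pos (Real.Gamma_pos_of_pos (by linarith)) (by positivity)

lemma integrable_conj_laguerre2D_mul_bimonomial (m n a b : ℕ) :
    Integrable (fun z => conj (laguerre2D β m n z) * bimonomial a b z) (laguerreMeasure β) := by
  simp_rw [conj_laguerre2D, sum_mul, mul_assoc, bimonomial_mul_bimonomial]
  exact integrable_finsetSum _ fun k _ =>
    ((hasExpMoments_laguerreMeasure hβ).integrable_bimonomial _ _).const_mul _

theorem integral_conj_laguerre2D_mul_bimonomial {m n a b : ℕ} (h : min a b ≤ min m n) :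
    ∫ z, conj (laguerre2D β m n z) * bimonomial a b z ∂laguerreMeasure β =
      if m = a ∧ n = b then ((-1) ^ min m n * Real.Gamma (β + (max m n : ℕ) + 1) : ℂ) else 0 := by
  have hint (c d : ℕ) :
      Integrable (fun z => bimonomial c d z * bimonomial a b z) (laguerreMeasure β) := by
    simp_rw [bimonomial_mul_bimonomial]
    exact (hasExpMoments_laguerreMeasure hβ).integrable_bimonomial _ _
  rw [integral_conj_laguerre2D_mul hint]
  simp_rw [bimonomial_mul_bimonomial, integral_bimonomial_laguerreMeasure hβ]
  by_cases hdiff : n + a = m + b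
  case pos =>
    have hterm : ∀ k ∈ range (min m n + 1),
        (laguerreCoeff β (max m n) (min m n) k *
          if n - k + a = m - k + b then (Real.Gamma (β + (n - k + a : ℕ) + 1) : ℂ) else 0) =
        (laguerreCoeff β (max m n) (min m n) k *
          Real.Gamma (β + (max m n - k + min a b : ℕ) + 1) : ℝ) := by
      intro k hk
      rw [mem_range] at hk
      rw [if_pos (by omega), show n - k + a = max m n - k + min a b by omega, Complex.ofReal_mul]
    rw [sum_congr rfl hterm, ← Complex.ofReal_sum, sum_laguerreCoeff_mul_Gamma hβ min_le_max h]
    have hindex : min a b = min m n ↔ m = a ∧ n = b := by omega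
    simp only [hindex]
    split_ifs <;> simp
  case neg =>
    rw [if_neg (by omega)]
    refine sum_eq_zero fun k hk => ?_
    rw [mem_range] at hk
    rw [if_neg (by omega), mul_zero]

lemma integral_conj_laguerre2D_mul_laguerre2D_of_min_le {m n a b : ℕ} (h : min a b ≤ min m n) :
    ∫ z, conj (laguerre2D β m n z) * laguerre2D β a b z ∂laguerreMeasure β =
      if m = a ∧ n = b then (Cconst β m n : ℂ) else 0 := by
  simp_rw [laguerre2D_eq_sum β a b, mul_sum, mul_left_comm]
  rw [integral_finsetSum _ fun k _ =>
    (integrable_conj_laguerre2D_mul_bimonomial hβ _ _ _ _).const_mul _]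
  simp_rw [integral_const_mul]
  have lower_terms : ∀ k ∈ range (min a b + 1), k ≠ 0 →
      laguerreCoeff β (max a b) (min a b) k * ∫ z, conj (laguerre2D β m n z) *
        bimonomial (a - k) (b - k) z ∂laguerreMeasure β = 0 := by
    intro k hk hk0
    rw [mem_range] at hk
    rw [integral_conj_laguerre2D_mul_bimonomial hβ (by omega), if_neg (by omega), mul_zero]
  rw [sum_eq_single_of_mem 0 (by simp) lower_terms, Nat.sub_zero, Nat.sub_zero,
    integral_conj_laguerre2D_mul_bimonomial hβ h, laguerreCoeff_zero hβ]
  split_ifs with hindex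
  · obtain ⟨rfl, rfl⟩ := hindex
    have sign_sq : (-1 : ℂ) ^ min m n * (-1) ^ min m n = 1 := by simp [← mul_pow]
    push_cast [Cconst]
    rw [div_mul_eq_mul_div, ← mul_assoc, sign_sq, one_mul]
  · rw [mul_zero]

theorem integral_conj_laguerre2D_mul_laguerre2D (m n a b : ℕ) :
    ∫ z, conj (laguerre2D β m n z) * laguerre2D β a b z ∂laguerreMeasure β =
      if m = a ∧ n = b then (Cconst β m n : ℂ) else 0 := by
  rcases le_total (min a b) (min m n) with h | h
  · exact integral_conj_laguerre2D_mul_laguerre2D_of_min_le hβ h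
  · have h_symm := congrArg conj (integral_conj_laguerre2D_mul_laguerre2D_of_min_le hβ h)
    rw [← integral_conj] at h_symm
    simp only [map_mul, Complex.conj_conj, mul_comm (laguerre2D β a b _)] at h_symm
    rw [h_symm]
    by_cases hindex : m = a ∧ n = b
    · obtain ⟨rfl, rfl⟩ := hindex
      simp
    · rw [if_neg (by tauto), if_neg hindex, map_zero]

lemma integral_bimonomial_mul_eq_zero_of_laguerre2D {μ : Measure ℂ} {g : ℂ → ℂ}
    (hg : ∀ a b, Integrable (fun z => bimonomial a b z * g z) μ)
    (h : ∀ m n, ∫ z, conj (laguerre2D β m n z) * g z ∂μ = 0) (a b : ℕ) :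
    ∫ z, bimonomial a b z * g z ∂μ = 0 := by
  induction hs : min a b using Nat.strong_induction_on generalizing a b with
  | _ s ih =>
    have lower_terms : ∀ k ∈ range (min b a + 1), k ≠ 0 →
        laguerreCoeff β (max b a) (min b a) k *
          ∫ z, bimonomial (a - k) (b - k) z * g z ∂μ = 0 := by
      intro k hk hk0
      rw [mem_range] at hk
      rw [ih _ (by omega) (a - k) (b - k) rfl, mul_zero]
    have h_sum := h b a
    rw [integral_conj_laguerre2D_mul hg, sum_eq_single_of_mem 0 (by simp) lower_terms,
      laguerreCoeff_zero hβ] at h_sum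
    refine (mul_eq_zero.mp h_sum).resolve_left ?_
    simp [Nat.factorial_ne_zero]

theorem ae_eq_zero_of_integral_conj_laguerre2D_mul_eq_zero {g : ℂ → ℂ}
    (hg : MemLp g 2 (laguerreMeasure β))
    (h : ∀ m n, ∫ z, conj (laguerre2D β m n z) * g z ∂laguerreMeasure β = 0) :
    g =ᵐ[laguerreMeasure β] 0 := by
  have hμ := hasExpMoments_laguerreMeasure hβ
  exact ae_eq_zero_of_integral_bimonomial_mul_eq_zero (hμ.integrable_exp_mul_norm_smul hg)
    (integral_bimonomial_mul_eq_zero_of_laguerre2D hβ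
      (fun a b => (hμ.memLp_two_bimonomial a b).integrable_mul hg) h)

end Laguerre2D

section L2

variable {α 𝕜 ι : Type*} [RCLike 𝕜] [MeasurableSpace α] {μ : Measure α}

lemma inner_eq_integral_conj_mul_div {F G : Lp 𝕜 2 μ} {f : α → 𝕜} {c : 𝕜}
    (hF : F =ᵐ[μ] fun x => f x / c) :
    inner 𝕜 F G = (∫ x, conj (f x) * G x ∂μ) / conj c := by
  rw [L2.inner_def, ← integral_div]
  refine integral_congr_ae ?_
  filter_upwards [hF] with x hx
  rw [hx, RCLike.inner_apply, map_div₀]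
  ring

variable {F : ι → Lp 𝕜 2 μ} {f : ι → α → 𝕜} {c : ι → 𝕜} (hc : ∀ i, c i ≠ 0)
  (hF : ∀ i, F i =ᵐ[μ] fun x => f i x / c i)

include hc hF

theorem orthonormal_of_integral_conj_mul [DecidableEq ι]
    (hf : ∀ i j, ∫ x, conj (f i x) * f j x ∂μ = if i = j then conj (c i) * c i else 0) :
    Orthonormal 𝕜 F := by
  rw [orthonormal_iff_ite]
  intro i j
  have integral_eq : ∫ x, conj (f i x) * F j x ∂μ = (∫ x, conj (f i x) * f j x ∂μ) / c j := by
    rw [← integral_div]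
    refine integral_congr_ae ?_
    filter_upwards [hF j] with x hx
    rw [hx, mul_div_assoc]
  rw [inner_eq_integral_conj_mul_div (hF i), integral_eq, hf]
  split_ifs with hij
  · subst hij
    have hc_conj : conj (c i) ≠ 0 := (map_ne_zero _).mpr (hc i)
    rw [mul_div_cancel_right₀ _ (hc i), div_self hc_conj]
  · simp

theorem topologicalClosure_span_range_eq_top_of_integral_conj_mul
    (hf : ∀ g : α → 𝕜, MemLp g 2 μ → (∀ i, ∫ x, conj (f i x) * g x ∂μ = 0) → g =ᵐ[μ] 0) :
    (Submodule.span 𝕜 (Set.range F)).topologicalClosure = ⊤ := by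
  rw [Submodule.topologicalClosure_eq_top_iff, Submodule.eq_bot_iff]
  intro G hG
  refine Lp.eq_zero_iff_ae_eq_zero.mpr (hf G (Lp.memLp G) fun i => ?_)
  have h_inner := (Submodule.mem_orthogonal _ _).mp hG (F i) (Submodule.subset_span ⟨i, rfl⟩)
  rw [inner_eq_integral_conj_mul_div (hF i)] at h_inner
  exact (div_eq_zero_iff.mp h_inner).resolve_right ((map_ne_zero _).mpr (hc i))

end L2

theorem laguerre2D_complete_orthonormal_general (β : ℝ) (hβ : -1 < β)
    (ν : Measure ℂ)
    (hν : ν = volume.withDensity (fun z =>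
      ENNReal.ofReal (Real.pi⁻¹ * ‖z‖ ^ (2 * β) * Real.exp (-(‖z‖ ^ 2)))))
    (F : ℕ × ℕ → Lp ℂ 2 ν)
    (hF : ∀ p : ℕ × ℕ,
      (F p : ℂ → ℂ) =ᵐ[ν]
        fun z => Zfull β p.1 p.2 z (starRingEnd ℂ z) / ((Real.sqrt (Cconst β p.1 p.2) : ℝ) : ℂ)) :
    Orthonormal ℂ F ∧ (Submodule.span ℂ (Set.range F)).topologicalClosure = ⊤ := by
  obtain rfl : ν = laguerreMeasure β := hν
  have hC (p : ℕ × ℕ) : ((Real.sqrt (Cconst β p.1 p.2) : ℝ) : ℂ) ≠ 0 :=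
    Complex.ofReal_ne_zero.mpr (Real.sqrt_ne_zero'.mpr (Cconst_pos hβ p.1 p.2))
  constructor
  · refine orthonormal_of_integral_conj_mul (f := fun p => laguerre2D β p.1 p.2) hC hF fun p q => ?_
    rw [integral_conj_laguerre2D_mul_laguerre2D hβ, Complex.conj_ofReal, ← Complex.ofReal_mul,
      Real.mul_self_sqrt (Cconst_pos hβ p.1 p.2).le]
    simp only [Prod.ext_iff]
  · refine topologicalClosure_span_range_eq_top_of_integral_conj_mul
      (f := fun p => laguerre2D β p.1 p.2) hC hF fun g hg h => ?_
    exact ae_eq_zero_of_integral_conj_laguerre2D_mul_eq_zero hβ hg fun m n => h (m, n)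

/-- The normalized 2D Laguerre polynomials `z ↦ Z^{(β)}_{m,n}(z, conj z)/√C(m,n,β)`,
`(m,n) ∈ ℕ × ℕ`, form a complete orthonormal system of
`L²(ℂ, π⁻¹ |z|^{2β} e^{−|z|²} dA(z))`. -/
theorem laguerre2D_complete_orthonormal (β : ℝ) (hβ : 0 ≤ β)
    (ν : Measure ℂ)
    (hν : ν = volume.withDensity (fun z =>
      ENNReal.ofReal (Real.pi⁻¹ * ‖z‖ ^ (2 * β) * Real.exp (-(‖z‖ ^ 2)))))
    (F : ℕ × ℕ → Lp ℂ 2 ν)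
    (hF : ∀ p : ℕ × ℕ,
      (F p : ℂ → ℂ) =ᵐ[ν]
        fun z => Zfull β p.1 p.2 z (starRingEnd ℂ z) / ((Real.sqrt (Cconst β p.1 p.2) : ℝ) : ℂ)) :
    Orthonormal ℂ F ∧ (Submodule.span ℂ (Set.range F)).topologicalClosure = ⊤ :=
  laguerre2D_complete_orthonormal_general β (by linarith) ν hν F hF
end

section
/- For every real β ≥ 0, all integers m ≥ n ≥ 1, and all z, w ∈ ℂ: w · ∂_w Z^{(β)}_{m,n}(z,w) = n · Z^{(β)}_{m,n}(z,w) − (β+m) · Z^{(β)}_{m−1,n−1}(z,w). Consequently, also (z ∂_z − w ∂_w) Z^{(β)}_{m,n}(z,w) = (m−n) · Z^{(β)}_{m,n}(z,w) holds for all m ≥ n ≥ 0. (Complex-variable form of the differential recurrences q̄ ∂_{q̄} Z = nZ − (β+m)Z_{m−1,n−1} and (q∂_q − q̄∂_{q̄})Z = (m−n)Z.) -/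
/-!
In `Z_{m,n} = ∑ a_k z^(m-k) w^(n-k)` the Euler operators `w ∂_w` and `z ∂_z` multiply the `k`-th
term by `n - k` and `m - k`. Hence `n Z - w ∂_w Z` and `m Z - z ∂_z Z` are the same sum `∑ k a_k ⋯`,
and subtracting gives the second recurrence. That sum has no `k = 0` term, and after the shift
`k ↦ k + 1` it is `(β + m) Z_{m-1,n-1}`, because `(β+1)_m / (β+1)_{m-k} = (β+1+m-k)_k` acquires
exactly the factor `β + m` when `m - 1` and `k - 1` grow to `m` and `k`.
-/

open Finset

lemma poch_ne_zero_iff {a : ℝ} {j : ℕ} : poch a j ≠ 0 ↔ ∀ i < j, a + i ≠ 0 := by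
  simp only [poch, Finset.prod_ne_zero_iff, Finset.mem_range]

lemma poch_succ (a : ℝ) (j : ℕ) : poch a (j + 1) = poch a j * (a + j) :=
  Finset.prod_range_succ _ j

lemma poch_add (a : ℝ) (i j : ℕ) : poch a (i + j) = poch a i * poch (a + i) j := by
  simp only [poch, Finset.prod_range_add, Nat.cast_add, add_assoc]

lemma poch_div_poch_sub {a : ℝ} {m k : ℕ} (hkm : k ≤ m) (ha : poch a (m - k) ≠ 0) :
    poch a m / poch a (m - k) = poch (a + (m - k)) k := by
  rw [div_eq_iff ha, mul_comm, ← Nat.cast_sub hkm, ← poch_add, Nat.sub_add_cancel hkm]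

section DiagSum

variable {R : Type*} [Semiring R]

/-- The polynomial `∑_{k ≤ n} a_k z^(m-k) w^(n-k)`, supported on a single diagonal of bidegrees.
The exponents are truncated, so this reading requires `n ≤ m`. -/
def diagSum (a : ℕ → R) (m n : ℕ) (z w : R) : R :=
  ∑ k ∈ Finset.range (n + 1), a k * z ^ (m - k) * w ^ (n - k)

lemma diagSum_congr {a b : ℕ → R} {m n : ℕ} (h : ∀ k ≤ n, a k = b k) (z w : R) :
    diagSum a m n z w = diagSum b m n z w :=
  Finset.sum_congr rfl fun k hk => by rw [h k (Finset.mem_range_succ_iff.mp hk)]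

lemma diagSum_const_mul (c : R) (a : ℕ → R) (m n : ℕ) (z w : R) :
    diagSum (fun k => c * a k) m n z w = c * diagSum a m n z w := by
  simp only [diagSum, Finset.mul_sum, mul_assoc]

lemma diagSum_succ_succ {a : ℕ → R} (ha : a 0 = 0) (m n : ℕ) (z w : R) :
    diagSum a (m + 1) (n + 1) z w = diagSum (fun k => a (k + 1)) m n z w := by
  simp only [diagSum, Finset.sum_range_succ' _ (n + 1), Nat.add_sub_add_right, ha, zero_mul,
    add_zero]

end DiagSum

section EulerOperator

variable {𝕜 : Type*} [NontriviallyNormedField 𝕜]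

lemma mul_deriv_sum_mul_pow {ι : Type*} (s : Finset ι) (c : ι → 𝕜) (e : ι → ℕ) (x : 𝕜) :
    x * deriv (fun y => ∑ i ∈ s, c i * y ^ e i) x = ∑ i ∈ s, (e i : 𝕜) * (c i * x ^ e i) := by
  have hderiv : HasDerivAt (fun y => ∑ i ∈ s, c i * y ^ e i)
      (∑ i ∈ s, c i * (e i * x ^ (e i - 1))) x :=
    HasDerivAt.fun_sum fun i _ => (hasDerivAt_pow (e i) x).const_mul (c i)
  rw [hderiv.deriv, Finset.mul_sum]
  refine Finset.sum_congr rfl fun i _ => ?_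
  cases e i with
  | zero => simp
  | succ d => rw [Nat.add_sub_cancel]; ring

lemma mul_deriv_diagSum_right (a : ℕ → 𝕜) (m n : ℕ) (z w : 𝕜) :
    w * deriv (fun w' => diagSum a m n z w') w
      = n * diagSum a m n z w - diagSum (fun k => k * a k) m n z w := by
  simp only [diagSum]
  rw [mul_deriv_sum_mul_pow, Finset.mul_sum, ← Finset.sum_sub_distrib]
  refine Finset.sum_congr rfl fun k hk => ?_
  rw [Nat.cast_sub (Finset.mem_range_succ_iff.mp hk)]
  ring

lemma mul_deriv_diagSum_left (a : ℕ → 𝕜) {m n : ℕ} (hnm : n ≤ m) (z w : 𝕜) :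
    z * deriv (fun z' => diagSum a m n z' w) z
      = m * diagSum a m n z w - diagSum (fun k => k * a k) m n z w := by
  simp only [diagSum, mul_right_comm _ (_ ^ (m - _))]
  rw [mul_deriv_sum_mul_pow, Finset.mul_sum, ← Finset.sum_sub_distrib]
  refine Finset.sum_congr rfl fun k hk => ?_
  rw [Nat.cast_sub ((Finset.mem_range_succ_iff.mp hk).trans hnm)]
  ring

end EulerOperator

/-- The coefficient of `z^(m-k) w^(n-k)` in `Z^{(β)}_{m,n}`, with `(β+1)_m / (β+1)_{m-k}` written
as the polynomial `(β+1+m-k)_k` in `β`, so that no denominator depends on `β`. -/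
noncomputable def Zcoeff (β : ℝ) (m n k : ℕ) : ℝ :=
  (-1) ^ (n - k) * poch (β + 1 + (m - k)) k / (k.factorial * (n - k).factorial)

lemma Zcoeff_succ_succ_succ (β : ℝ) (m n k : ℕ) :
    ((k + 1 : ℕ) : ℝ) * Zcoeff β (m + 1) (n + 1) (k + 1) = (β + (m + 1 : ℕ)) * Zcoeff β m n k := by
  have hshift : ((m + 1 : ℕ) : ℝ) - (k + 1 : ℕ) = m - k := by push_cast; ring
  simp only [Zcoeff, hshift, poch_succ, Nat.add_sub_add_right, Nat.factorial_succ]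
  push_cast
  field_simp
  ring

lemma diagSum_mul_Zcoeff_succ_succ (β : ℝ) (m n : ℕ) (z w : ℂ) :
    diagSum (fun k => (k : ℂ) * Zcoeff β (m + 1) (n + 1) k) (m + 1) (n + 1) z w
      = ((β + (m + 1 : ℕ) : ℝ) : ℂ) * diagSum (fun k => (Zcoeff β m n k : ℂ)) m n z w := by
  rw [diagSum_succ_succ (by simp), ← diagSum_const_mul]
  refine diagSum_congr (fun k _ => ?_) z w
  exact_mod_cast Zcoeff_succ_succ_succ β m n k

lemma Zc_eq_diagSum {β : ℝ} (hβ : ∀ j : ℕ, β + 1 + j ≠ 0) {m n : ℕ} (hnm : n ≤ m) (z w : ℂ) :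
    Zc β m n z w = diagSum (fun k => (Zcoeff β m n k : ℂ)) m n z w := by
  refine diagSum_congr (fun k hk => congrArg Complex.ofReal ?_) z w
  rw [Zcoeff, ← poch_div_poch_sub (hk.trans hnm) (poch_ne_zero_iff.mpr fun i _ => hβ i),
    mul_div_assoc', div_div, mul_comm (poch _ _)]

theorem diff_recurrence_w_general (β : ℝ) (hβ : ∀ j : ℕ, β + 1 + j ≠ 0) :
    (∀ m n : ℕ, 1 ≤ n → n ≤ m → ∀ z w : ℂ,
        w * deriv (fun w' => Zc β m n z w') w
          = (n : ℂ) * Zc β m n z w - ((β + m : ℝ) : ℂ) * Zc β (m - 1) (n - 1) z w) ∧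
    (∀ m n : ℕ, n ≤ m → ∀ z w : ℂ,
        z * deriv (fun z' => Zc β m n z' w) z - w * deriv (fun w' => Zc β m n z w') w
          = (((m : ℝ) - n : ℝ) : ℂ) * Zc β m n z w) := by
  refine ⟨fun m n hn hnm z w => ?_, fun m n hnm z w => ?_⟩
  · obtain ⟨n, rfl⟩ := Nat.exists_eq_add_of_le' hn
    obtain ⟨m, rfl⟩ := Nat.exists_eq_add_of_le' (hn.trans hnm)
    simp only [Nat.add_sub_cancel, Zc_eq_diagSum hβ hnm,
      Zc_eq_diagSum hβ (Nat.le_of_succ_le_succ hnm)]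
    rw [mul_deriv_diagSum_right, diagSum_mul_Zcoeff_succ_succ]
  · simp only [Zc_eq_diagSum hβ hnm]
    rw [mul_deriv_diagSum_left _ hnm, mul_deriv_diagSum_right]
    push_cast
    ring

/-- Differential recurrences: `w ∂_w Z^{(β)}_{m,n} = n Z^{(β)}_{m,n} − (β+m) Z^{(β)}_{m−1,n−1}`
for `m ≥ n ≥ 1`, and consequently `(z∂_z − w∂_w) Z^{(β)}_{m,n} = (m−n) Z^{(β)}_{m,n}`
for all `m ≥ n ≥ 0`. -/
theorem diff_recurrence_w (β : ℝ) (hβ : 0 ≤ β) :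
    (∀ m n : ℕ, 1 ≤ n → n ≤ m → ∀ z w : ℂ,
        w * deriv (fun w' => Zc β m n z w') w
          = (n : ℂ) * Zc β m n z w - ((β + m : ℝ) : ℂ) * Zc β (m - 1) (n - 1) z w) ∧
    (∀ m n : ℕ, n ≤ m → ∀ z w : ℂ,
        z * deriv (fun z' => Zc β m n z' w) z - w * deriv (fun w' => Zc β m n z w') w
          = (((m : ℝ) - n : ℝ) : ℂ) * Zc β m n z w) :=
  diff_recurrence_w_general β fun j => by positivity
end
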